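/- Let V be a finite set with |V| = n ≥ 1, let μ and ν be probability distributions on 2^V with ν absolutely continuous with respect to μ, and let f = dν/dμ. For v ∈ V, let D_v denote marginalization onto the coordinates V∖{v}, i.e., (νD_v)(τ) = ν(τ) + ν(τ ∪ {v}) for τ ⊆ V∖{v}, and let P_v be the Markov transition matrix on 2^V that resamples the membership of v from the conditional distribution of μ given the configuration on V∖{v}. Then: (a) (1/n)·Σ_{v∈V} D(νD_v ‖ μD_v) = D(ν ‖ μ) − (1/n)·Σ_{v∈V} E_μ[Ent_v(f)]; and (b) if C > 0 satisfies D(ν ‖ μ) ≤ (1/C)·Σ_{v∈V} E_μ[Ent_v(f)], then (1/n)·Σ_{v∈V} D(νP_v ‖ μ) ≤ (1/n)·Σ_{v∈V} D(νD_v ‖ μD_v) ≤ (1 − C/n)·D(ν ‖ μ). -/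

import Mathlib

/-!
Forgetting or resampling the coordinate `v` depends on a configuration only through the map
`π σ = σ ∖ {v}`, so the argument runs for an arbitrary map `π` between finite sets.
Write `N` and `M` for the masses which `ν` and `μ` give to a fibre of `π`. Expanding the entropy of
`dν/dμ` with respect to the conditional distribution `μ/M` gives, on each fibre,
`∑ ν log (ν/μ) = N log (N/M) + M · Ent(dν/dμ)`, and summing over the fibres is the chain rule
`D(ν ‖ μ) = D(π_*ν ‖ π_*μ) + E_μ[Ent(dν/dμ | π)]`. Part (a) is its average over `v`.
Resampling a fibre replaces `ν` by `N · μ/M`, whose density with respect to `μ` is constant on the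
fibre, so that only the divergence of the marginals is left: the first inequality of (b) is an
equality.
-/

open Finset

noncomputable section
attribute [local instance] Classical.propDecidable

/-- Push a distribution `ν` one step through a Markov transition matrix `P`. -/
def stepDist {Ω : Type*} [Fintype Ω] (ν : Ω → ℝ) (P : Ω → Ω → ℝ) : Ω → ℝ :=
  fun y => ∑ x, ν x * P x y

/-- KL divergence `D(ν‖μ) = Σ_x ν(x) log(ν(x)/μ(x))`. -/
def KLdiv {Ω : Type*} [Fintype Ω] (ν μ : Ω → ℝ) : ℝ :=
  ∑ x, ν x * Real.log (ν x / μ x)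

variable {V : Type*} [Fintype V] [DecidableEq V]

/-- Marginalization onto the coordinates `V ∖ {v}`: the pushforward of `ν` under
forgetting the membership of `v`, supported on sets not containing `v`. -/
def margAt (ν : Finset V → ℝ) (v : V) : Finset V → ℝ :=
  fun τ => if v ∈ τ then 0 else ν τ + ν (insert v τ)

/-- Glauber single-site update at `v`: resample the membership of `v` from the
conditional distribution of `μ` given the configuration on `V ∖ {v}`. -/
def siteUpdate (μ : Finset V → ℝ) (v : V) (σ τ : Finset V) : ℝ :=
  if τ.erase v = σ.erase v then
    μ τ / (μ (insert v (σ.erase v)) + μ (σ.erase v))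
  else 0

/-- `Ent_v(f)` evaluated at the configuration `τ` (only `τ ∖ {v}` matters): the
entropy functional of `f` with respect to the conditional distribution, under `μ`,
of the membership of `v` given the configuration on `V ∖ {v}`. -/
def entAt (μ : Finset V → ℝ) (f : Finset V → ℝ) (v : V) (τ : Finset V) : ℝ :=
  (μ (τ.erase v) / (μ (τ.erase v) + μ (insert v (τ.erase v))) *
      (f (τ.erase v) * Real.log (f (τ.erase v))) +
    μ (insert v (τ.erase v)) / (μ (τ.erase v) + μ (insert v (τ.erase v))) *
      (f (insert v (τ.erase v)) * Real.log (f (insert v (τ.erase v))))) -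
  (μ (τ.erase v) / (μ (τ.erase v) + μ (insert v (τ.erase v))) * f (τ.erase v) +
    μ (insert v (τ.erase v)) / (μ (τ.erase v) + μ (insert v (τ.erase v))) *
      f (insert v (τ.erase v))) *
    Real.log
      (μ (τ.erase v) / (μ (τ.erase v) + μ (insert v (τ.erase v))) * f (τ.erase v) +
        μ (insert v (τ.erase v)) / (μ (τ.erase v) + μ (insert v (τ.erase v))) *
          f (insert v (τ.erase v)))

section Fiber

variable {Ω Ω' : Type*} [Fintype Ω] [DecidableEq Ω']

/-- The pushforward `π_*ν` of a distribution `ν` under a map `π`; marginalization is the case where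
`π` forgets a coordinate. -/
def pushDist (π : Ω → Ω') (ν : Ω → ℝ) : Ω' → ℝ :=
  fun t => ∑ x with π x = t, ν x

/-- The entropy functional `E_ρ[g log g] - E_ρ[g] log E_ρ[g]` of `g` with respect to a
distribution `ρ` carried by the finite set `s`. -/
def entropyOn {α : Type*} (s : Finset α) (ρ g : α → ℝ) : ℝ :=
  ∑ x ∈ s, ρ x * (g x * Real.log (g x)) -
    (∑ x ∈ s, ρ x * g x) * Real.log (∑ x ∈ s, ρ x * g x)

/-- The conditional entropy of `f` given `π = t`: its entropy functional with respect to the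
conditional distribution of `μ` on the fibre of `π` over `t`. It is `0` on a fibre of mass `0`. -/
def condEntropy (π : Ω → Ω') (μ f : Ω → ℝ) (t : Ω') : ℝ :=
  entropyOn {x | π x = t} (fun x => μ x / pushDist π μ t) f

/-- The Markov transition matrix that resamples a point from the conditional distribution of `μ`
given its image under `π`; the Glauber update at a site is the case where `π` forgets that site.
The rows of points whose fibre has mass `0` vanish, because `x / 0 = 0`. -/
def resample (π : Ω → Ω') (μ : Ω → ℝ) (x y : Ω) : ℝ :=
  if π y = π x then μ y / pushDist π μ (π x) else 0

lemma eq_zero_of_sum_eq_zero {α : Type*} {s : Finset α} {μ ν : α → ℝ}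
    (hμ : ∀ x ∈ s, 0 ≤ μ x) (habs : ∀ x ∈ s, μ x = 0 → ν x = 0) (hs : ∑ x ∈ s, μ x = 0) :
    ∀ x ∈ s, ν x = 0 :=
  fun x hx => habs x hx ((sum_eq_zero_iff_of_nonneg hμ).1 hs x hx)

lemma sum_mul_log_div_eq_add_entropyOn {α : Type*} {s : Finset α} {μ ν : α → ℝ}
    (hμ : ∀ x ∈ s, 0 ≤ μ x) (habs : ∀ x ∈ s, μ x = 0 → ν x = 0) :
    ∑ x ∈ s, ν x * Real.log (ν x / μ x) =
      (∑ x ∈ s, ν x) * Real.log ((∑ x ∈ s, ν x) / ∑ x ∈ s, μ x) +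
        (∑ x ∈ s, μ x) *
          entropyOn s (fun x => μ x / ∑ y ∈ s, μ y) (fun x => ν x / μ x) := by
  set M := ∑ x ∈ s, μ x
  set N := ∑ x ∈ s, ν x
  rcases eq_or_ne M 0 with h0 | h0
  · have hν : ∀ x ∈ s, ν x = 0 := eq_zero_of_sum_eq_zero hμ habs h0
    have hN0 : N = 0 := sum_eq_zero hν
    rw [h0, hN0, sum_eq_zero fun x hx => by rw [hν x hx, zero_mul]]
    ring
  · have hdensity (x) (hx : x ∈ s) : μ x / M * (ν x / μ x) = ν x / M := by
      rw [div_mul_eq_mul_div, mul_div_cancel_of_imp' (habs x hx)]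
    have hmean : ∑ x ∈ s, μ x / M * (ν x / μ x) = N / M := by
      rw [sum_congr rfl hdensity, ← sum_div]
    have hmean_log : ∑ x ∈ s, μ x / M * (ν x / μ x * Real.log (ν x / μ x)) =
        (∑ x ∈ s, ν x * Real.log (ν x / μ x)) / M := by
      rw [sum_div]
      exact sum_congr rfl fun x hx => by rw [← mul_assoc, hdensity x hx, div_mul_eq_mul_div]
    rw [entropyOn, hmean, hmean_log]
    field_simp
    ring

lemma pushDist_eq_zero {π : Ω → Ω'} {μ ν : Ω → ℝ} (hμ : ∀ x, 0 ≤ μ x)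
    (habs : ∀ x, μ x = 0 → ν x = 0) {t : Ω'} (ht : pushDist π μ t = 0) : pushDist π ν t = 0 :=
  sum_eq_zero <| eq_zero_of_sum_eq_zero (fun x _ => hμ x) (fun x _ => habs x) ht

lemma stepDist_resample (π : Ω → Ω') (μ ν : Ω → ℝ) (y : Ω) :
    stepDist ν (resample π μ) y = pushDist π ν (π y) * (μ y / pushDist π μ (π y)) := by
  simp only [stepDist, resample, pushDist, mul_ite, mul_zero, sum_mul, sum_filter, ite_mul,
    zero_mul]
  exact sum_congr rfl fun x _ => by grind

variable [Fintype Ω']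

lemma sum_mul_comp_eq_sum_pushDist_mul (π : Ω → Ω') (μ : Ω → ℝ) (g : Ω' → ℝ) :
    ∑ x, μ x * g (π x) = ∑ t, pushDist π μ t * g t := by
  rw [← sum_fiberwise univ π]
  refine sum_congr rfl fun t _ => ?_
  rw [pushDist, sum_mul]
  exact sum_congr rfl fun x hx => by rw [(mem_filter.1 hx).2]

theorem KLdiv_eq_KLdiv_pushDist_add_condEntropy (π : Ω → Ω') {μ ν : Ω → ℝ} (hμ : ∀ x, 0 ≤ μ x)
    (habs : ∀ x, μ x = 0 → ν x = 0) :
    KLdiv ν μ = KLdiv (pushDist π ν) (pushDist π μ) +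
      ∑ x, μ x * condEntropy π μ (fun y => ν y / μ y) (π x) := by
  rw [sum_mul_comp_eq_sum_pushDist_mul, KLdiv, KLdiv, ← sum_fiberwise univ π, ← sum_add_distrib]
  exact sum_congr rfl fun t _ =>
    sum_mul_log_div_eq_add_entropyOn (fun x _ => hμ x) (fun x _ => habs x)

theorem KLdiv_stepDist_resample (π : Ω → Ω') {μ ν : Ω → ℝ} (hμ : ∀ x, 0 ≤ μ x)
    (habs : ∀ x, μ x = 0 → ν x = 0) :
    KLdiv (stepDist ν (resample π μ)) μ = KLdiv (pushDist π ν) (pushDist π μ) := by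
  set N := pushDist π ν
  set M := pushDist π μ
  have hdensity (x) : stepDist ν (resample π μ) x * Real.log (stepDist ν (resample π μ) x / μ x) =
      μ x * (N (π x) / M (π x) * Real.log (N (π x) / M (π x))) := by
    rw [stepDist_resample]
    rcases eq_or_ne (μ x) 0 with h | h
    · simp [h]
    · have : N (π x) * (μ x / M (π x)) / μ x = N (π x) / M (π x) := by field_simp
      rw [this]
      ring
  calc KLdiv (stepDist ν (resample π μ)) μ
      = ∑ t, M t * (N t / M t * Real.log (N t / M t)) := by
        rw [KLdiv, ← sum_mul_comp_eq_sum_pushDist_mul π μ fun t => N t / M t * Real.log (N t / M t)]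
        exact sum_congr rfl fun x _ => hdensity x
    _ = KLdiv N M := sum_congr rfl fun t _ => by
        rw [← mul_assoc, mul_div_cancel_of_imp' (pushDist_eq_zero hμ habs)]

end Fiber

theorem kl_marginal_decomposition_general {ι Ω : Type*} {Ω' : ι → Type*} [Fintype ι] [Nonempty ι]
    [Fintype Ω] [∀ i, Fintype (Ω' i)] [∀ i, DecidableEq (Ω' i)]
    (π : ∀ i, Ω → Ω' i) (μ ν : Ω → ℝ) (hμ₀ : ∀ x, 0 ≤ μ x) (_hν₀ : ∀ x, 0 ≤ ν x)
    (habs : ∀ x, μ x = 0 → ν x = 0) :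
    (1 / (Fintype.card ι : ℝ)) * ∑ i, KLdiv (pushDist (π i) ν) (pushDist (π i) μ) =
      KLdiv ν μ - (1 / (Fintype.card ι : ℝ)) *
        ∑ i, ∑ x, μ x * condEntropy (π i) μ (fun y => ν y / μ y) (π i x) ∧
    (∀ i, KLdiv (stepDist ν (resample (π i) μ)) μ =
      KLdiv (pushDist (π i) ν) (pushDist (π i) μ)) ∧
    ∀ C : ℝ,
      C * KLdiv ν μ ≤ ∑ i, ∑ x, μ x * condEntropy (π i) μ (fun y => ν y / μ y) (π i x) →
      (1 / (Fintype.card ι : ℝ)) * ∑ i, KLdiv (pushDist (π i) ν) (pushDist (π i) μ) ≤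
        (1 - C / (Fintype.card ι : ℝ)) * KLdiv ν μ := by
  set n : ℝ := (Fintype.card ι : ℝ) with hn
  set E := ∑ i, ∑ x, μ x * condEntropy (π i) μ (fun y => ν y / μ y) (π i x)
  have hn₀ : 0 < n := Nat.cast_pos.2 Fintype.card_pos
  have hsum : n * KLdiv ν μ = ∑ i, KLdiv (pushDist (π i) ν) (pushDist (π i) μ) + E := by
    rw [← sum_add_distrib, hn, ← nsmul_eq_mul, ← card_univ, ← sum_const]
    exact sum_congr rfl fun i _ => KLdiv_eq_KLdiv_pushDist_add_condEntropy (π i) hμ₀ habs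
  have hmean : 1 / n * ∑ i, KLdiv (pushDist (π i) ν) (pushDist (π i) μ) =
      KLdiv ν μ - 1 / n * E := by
    rw [eq_sub_iff_add_eq, ← mul_add, ← hsum]
    field_simp
  refine ⟨hmean, fun i => KLdiv_stepDist_resample (π i) hμ₀ habs, fun C hC => ?_⟩
  calc 1 / n * ∑ i, KLdiv (pushDist (π i) ν) (pushDist (π i) μ)
      = KLdiv ν μ - 1 / n * E := hmean
    _ ≤ KLdiv ν μ - 1 / n * (C * KLdiv ν μ) := by gcongr
    _ = (1 - C / n) * KLdiv ν μ := by ring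

lemma sum_filter_erase_eq_of_mem {M : Type*} [AddCommMonoid M] {v : V} {τ : Finset V} (h : v ∈ τ)
    (g : Finset V → M) :
    ∑ σ with σ.erase v = τ, g σ = 0 := by
  rw [filter_false_of_mem, sum_empty]
  rintro σ - rfl
  exact notMem_erase v σ h

lemma sum_filter_erase_eq_of_notMem {M : Type*} [AddCommMonoid M] {v : V} {τ : Finset V} (h : v ∉ τ)
    (g : Finset V → M) :
    ∑ σ with σ.erase v = τ, g σ = g τ + g (insert v τ) := by
  have hfiber : ({σ | σ.erase v = τ} : Finset (Finset V)) = {τ, insert v τ} := by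
    ext σ
    by_cases hσ : v ∈ σ <;> grind
  rw [hfiber, sum_pair (ne_insert_of_notMem τ τ h)]

lemma pushDist_erase (v : V) (ν : Finset V → ℝ) :
    pushDist (fun σ => σ.erase v) ν = margAt ν v := by
  funext τ
  by_cases h : v ∈ τ
  · rw [pushDist, sum_filter_erase_eq_of_mem h, margAt, if_pos h]
  · rw [pushDist, sum_filter_erase_eq_of_notMem h, margAt, if_neg h]

lemma pushDist_erase_apply_erase (v : V) (ν : Finset V → ℝ) (τ : Finset V) :
    pushDist (fun σ => σ.erase v) ν (τ.erase v) = ν (τ.erase v) + ν (insert v (τ.erase v)) :=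
  sum_filter_erase_eq_of_notMem (notMem_erase v τ) ν

lemma condEntropy_erase (v : V) (μ f : Finset V → ℝ) (τ : Finset V) :
    condEntropy (fun σ => σ.erase v) μ f (τ.erase v) = entAt μ f v τ := by
  simp only [condEntropy, entropyOn, pushDist_erase_apply_erase, entAt,
    sum_filter_erase_eq_of_notMem (notMem_erase v τ)]

lemma resample_erase (v : V) (μ : Finset V → ℝ) :
    resample (fun σ => σ.erase v) μ = siteUpdate μ v := by
  funext σ τ
  rw [resample, pushDist_erase_apply_erase, add_comm, siteUpdate]

/-- Decomposition of the KL divergence along single-site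
marginalizations, and the resulting one-step entropy contraction under approximate
tensorization of entropy. -/
theorem kl_marginal_decomposition [Nonempty V]
    (μ ν : Finset V → ℝ)
    (hμ₀ : ∀ σ, 0 ≤ μ σ) (hμ₁ : ∑ σ : Finset V, μ σ = 1)
    (hν₀ : ∀ σ, 0 ≤ ν σ) (hν₁ : ∑ σ : Finset V, ν σ = 1)
    (habs : ∀ σ, μ σ = 0 → ν σ = 0) :
    ((1 / (Fintype.card V : ℝ)) *
        ∑ v : V, KLdiv (margAt ν v) (margAt μ v) =
      KLdiv ν μ -
        (1 / (Fintype.card V : ℝ)) *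
          ∑ v : V, ∑ τ : Finset V, μ τ * entAt μ (fun σ => ν σ / μ σ) v τ) ∧
    (∀ C : ℝ, 0 < C →
      KLdiv ν μ ≤
        (1 / C) * ∑ v : V, ∑ τ : Finset V, μ τ * entAt μ (fun σ => ν σ / μ σ) v τ →
      (1 / (Fintype.card V : ℝ)) *
          ∑ v : V, KLdiv (stepDist ν (siteUpdate μ v)) μ ≤
        (1 / (Fintype.card V : ℝ)) *
          ∑ v : V, KLdiv (margAt ν v) (margAt μ v) ∧
      (1 / (Fintype.card V : ℝ)) *
          ∑ v : V, KLdiv (margAt ν v) (margAt μ v) ≤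
        (1 - C / (Fintype.card V : ℝ)) * KLdiv ν μ) := by
  obtain ⟨hmean, hstep, hcontract⟩ :=
    kl_marginal_decomposition_general (fun (v : V) σ => σ.erase v) μ ν hμ₀ hν₀ habs
  simp only [pushDist_erase, condEntropy_erase, resample_erase] at hmean hstep hcontract
  refine ⟨hmean, fun C hC hD => ⟨by simp only [hstep, le_refl], hcontract C ?_⟩⟩
  rwa [one_div, le_inv_mul_iff₀ hC] at hD
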